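/- Baxter's vertex-face correspondence: for all u, v ∈ ℂ (with every bracket and theta value appearing in a denominator nonzero), all ε₁, ε₂ ∈ {+1,−1}, and all a, b, c ∈ ℤ with |a−b| = |b−c| = 1, one has Σ_{ε₁', ε₂' ∈ {±1}} R̄(u−v)_{(ε₁,ε₂),(ε₁',ε₂')} · ψ_{ε₁'}(u)^a_b · ψ_{ε₂'}(v)^b_c = Σ_{b' ∈ {a−1, a+1}, |b'−c| = 1} ψ_{ε₂}(v)^a_{b'} · ψ_{ε₁}(u)^{b'}_c · W̄(a, b; b', c | u−v). -/

import Mathlib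

noncomputable section

open Complex Finset

namespace Ell

/-- `x^s = exp(-iπ s /(r τ))`. -/
def xp (τ : ℂ) (r : ℝ) (s : ℂ) : ℂ :=
  Complex.exp (-Complex.I * (Real.pi : ℂ) * s / ((r : ℂ) * τ))

/-- `Θ_p(z) = ∏_{j ≥ 0} (1 - z p^j)(1 - p^{j+1}/z)(1 - p^{j+1})`. -/
def Theta (p z : ℂ) : ℂ :=
  ∏' j : ℕ, ((1 - z * p ^ j) * (1 - p ^ (j + 1) / z) * (1 - p ^ (j + 1)))

/-- The bracket `[u] = x^{u²/r - u} Θ_p(x^{2u})` with `p = x^{2r}`. -/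
def br (τ : ℂ) (r : ℝ) (u : ℂ) : ℂ :=
  xp τ r (u ^ 2 / (r : ℂ) - u) * Theta (xp τ r (2 * (r : ℂ))) (xp τ r (2 * u))

/-- Elliptic shifted factorial `[u]_n = ∏_{j=0}^{n-1} [u+j]`. -/
def brF (τ : ℂ) (r : ℝ) (u : ℂ) (n : ℕ) : ℂ :=
  ∏ j ∈ Finset.range n, br τ r (u + (j : ℂ))

/-- Elliptic binomial coefficient `C_n^k(α,β,γ)`. -/
def Cnk (τ : ℂ) (r : ℝ) (k n : ℕ) (α β γ : ℂ) : ℂ :=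
  brF τ r 1 k / (brF τ r 1 n * brF τ r 1 (k - n)) *
    (brF τ r (α - γ) n * brF τ r (α + γ + (k : ℂ) - (n : ℂ)) n *
      brF τ r (α - β) (k - n) * brF τ r (α + β + (n : ℂ)) (k - n)) /
    (brF τ r (β - γ + (n : ℂ) - (k : ℂ)) n * brF τ r (γ - β - (n : ℂ)) (k - n) *
      brF τ r (β + γ) k)

/-- The elliptic 6j-symbol `R_n^m(α,β,γ,δ;k)`. -/
def Rnm (τ : ℂ) (r : ℝ) (k n m : ℕ) (α β γ δ : ℂ) : ℂ :=
  ∑ j ∈ Finset.range (min n m + 1),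
    Cnk τ r n j α γ (β + (k : ℂ) - (n : ℂ)) * Cnk τ r (k - j) (m - j) β (γ + (j : ℂ)) δ

/-- Terminating very-well-poised elliptic hypergeometric sum with explicit
truncation `N`:  `Σ_{j=0}^N ([u₀+2j]/[u₀]) ([u₀]_j/[1]_j) ∏ᵢ [uᵢ]_j/[u₀+1-uᵢ]_j`. -/
def Vsum (τ : ℂ) (r : ℝ) (u₀ : ℂ) (us : List ℂ) (N : ℕ) : ℂ :=
  ∑ j ∈ Finset.range (N + 1),
    br τ r (u₀ + 2 * (j : ℂ)) / br τ r u₀ * (brF τ r u₀ j / brF τ r 1 j) *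
      (us.map fun ui => brF τ r ui j / brF τ r (u₀ + 1 - ui) j).prod

/-- "Every bracket appearing in a denominator of `C_n^k(·,β,γ)` is nonzero". -/
def CdenomNZ (τ : ℂ) (r : ℝ) (k n : ℕ) (β γ : ℂ) : Prop :=
  brF τ r 1 n ≠ 0 ∧ brF τ r 1 (k - n) ≠ 0 ∧
    brF τ r (β - γ + (n : ℂ) - (k : ℂ)) n ≠ 0 ∧
    brF τ r (γ - β - (n : ℂ)) (k - n) ≠ 0 ∧ brF τ r (β + γ) k ≠ 0

/-- "Every bracket appearing in a denominator of `R_n^m(α,β,γ,δ;k)` is nonzero". -/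
def RdenomNZ (τ : ℂ) (r : ℝ) (k n m : ℕ) (β γ δ : ℂ) : Prop :=
  ∀ j ≤ min n m,
    CdenomNZ τ r n j γ (β + (k : ℂ) - (n : ℂ)) ∧
      CdenomNZ τ r (k - j) (m - j) (γ + (j : ℂ)) δ

/-- Jacobi theta `ϑ₁(v|σ)`. -/
def th1 (v σ : ℂ) : ℂ :=
  2 * Complex.exp (2 * (Real.pi : ℂ) * Complex.I * σ / 8) *
    (∏' n : ℕ, (1 - Complex.exp (2 * (Real.pi : ℂ) * Complex.I * σ) ^ (n + 1))) *
    Complex.sin ((Real.pi : ℂ) * v) *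
    ∏' n : ℕ,
      (1 - 2 * Complex.exp (2 * (Real.pi : ℂ) * Complex.I * σ) ^ (n + 1) *
            Complex.cos (2 * (Real.pi : ℂ) * v) +
        Complex.exp (2 * (Real.pi : ℂ) * Complex.I * σ) ^ (2 * (n + 1)))

/-- Jacobi theta `ϑ₀(v|σ)`. -/
def th0 (v σ : ℂ) : ℂ :=
  -Complex.I * Complex.exp ((Real.pi : ℂ) * Complex.I * (v + σ / 4)) * th1 (v + σ / 2) σ

/-- Jacobi theta `ϑ₂(v|σ)`. -/
def th2 (v σ : ℂ) : ℂ := th1 (v + 1 / 2) σ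

/-- Jacobi theta `ϑ₃(v|σ)`. -/
def th3 (v σ : ℂ) : ℂ :=
  Complex.exp ((Real.pi : ℂ) * Complex.I * (v + σ / 4)) * th1 (v + (σ + 1) / 2) σ

/-- Intertwining vector component `ψ_ε(u)^a_b`, `ε ∈ {1, -1}`. -/
def psi (τ : ℂ) (r : ℝ) (u : ℂ) (ε : ℤ) (a b : ℤ) : ℂ :=
  if ε = 1 then th0 ((((a : ℂ) - (b : ℂ)) * u + (a : ℂ)) / (2 * (r : ℂ))) (τ / 2)
  else th3 ((((a : ℂ) - (b : ℂ)) * u + (a : ℂ)) / (2 * (r : ℂ))) (τ / 2)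

/-- The constant `C = x^{-r/4} e^{-iπ/4} τ^{1/2}`. -/
def Cc (τ : ℂ) (r : ℝ) : ℂ :=
  xp τ r (-(r : ℂ) / 4) * Complex.exp (-(Real.pi : ℂ) * Complex.I / 4) * τ ^ (1 / 2 : ℂ)

/-- Dual intertwining vector component `ψ*_ε(u)^a_b = -ε(a-b) C² ψ_{-ε}(u-1)^a_b/(2[b][u])`. -/
def psiStar (τ : ℂ) (r : ℝ) (u : ℂ) (ε : ℤ) (a b : ℤ) : ℂ :=
  -(ε : ℂ) * ((a : ℂ) - (b : ℂ)) * Cc τ r ^ 2 * psi τ r (u - 1) (-ε) a b /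
    (2 * br τ r (b : ℂ) * br τ r u)

/-- Sign attached to a boolean. -/
def sg (b : Bool) : ℤ := if b then 1 else -1

/-- Canonical path from `a`: up for `j ≤ n`, down afterwards. -/
def cpathZ (a n : ℤ) (j : ℕ) : ℤ := if (j : ℤ) ≤ n then a + j else a + 2 * n - j

/-- Admissibility: `a - b ∈ {-k, -k+2, …, k}`. -/
def adm (k : ℕ) (a b : ℤ) : Prop := (a - b).natAbs ≤ k ∧ (a - b - (k : ℤ)) % 2 = 0

instance (k : ℕ) (a b : ℤ) : Decidable (adm k a b) := by unfold adm; infer_instance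

/-- Fused intertwining vector component `ψ^{(k)}_μ(u)^a_b` (zero if `a,b` not admissible). -/
def psiF (τ : ℂ) (r : ℝ) (k : ℕ) (μ : ℤ) (u : ℂ) (a b : ℤ) : ℂ :=
  if adm k a b then
    ∑ ε ∈ Finset.univ.filter fun ε : Fin k → Bool => (∑ j, sg (ε j)) = μ,
      ∏ j : Fin k,
        psi τ r (u + (k : ℂ) - (((j : ℕ) + 1 : ℕ) : ℂ)) (sg (ε j))
          (cpathZ a (((k : ℤ) - (a - b)) / 2) (j : ℕ))
          (cpathZ a (((k : ℤ) - (a - b)) / 2) ((j : ℕ) + 1))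
  else 0

/-- Partial-sum path attached to a sign sequence `δ`, starting at `a`. -/
def spath (k : ℕ) (a : ℤ) (δ : Fin k → Bool) (j : ℕ) : ℤ :=
  a + ∑ i ∈ Finset.range j, if h : i < k then sg (δ ⟨i, h⟩) else 0

/-- Fused dual intertwining vector component `ψ*^{(k)}_μ(u)^b_a`
(sum over all admissible paths from `a` to `b`; zero if not admissible). -/
def psiStarF (τ : ℂ) (r : ℝ) (k : ℕ) (μ : ℤ) (u : ℂ) (b a : ℤ) : ℂ :=
  if adm k a b then
    ∑ δ ∈ Finset.univ.filter fun δ : Fin k → Bool => (∑ j, sg (δ j)) = b - a,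
      ∏ j : Fin k,
        psiStar τ r (u + (k : ℂ) - (((j : ℕ) + 1 : ℕ) : ℂ))
          (if ((j : ℕ) + 1 : ℤ) ≤ ((k : ℤ) + μ) / 2 then 1 else -1)
          (spath k a δ ((j : ℕ) + 1)) (spath k a δ (j : ℕ))
  else 0

/-- The `L`-matrix `L^{(k)}(a,b;c,d|u) = Σ_μ ψ*^{(k)}_μ(u)^d_c ψ^{(k)}_μ(u)^a_b`. -/
def Lk (τ : ℂ) (r : ℝ) (k : ℕ) (u : ℂ) (a b c d : ℤ) : ℂ :=
  ∑ i ∈ Finset.range (k + 1),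
    psiStarF τ r k ((k : ℤ) - 2 * (i : ℤ)) u d c * psiF τ r k ((k : ℤ) - 2 * (i : ℤ)) u a b

/-- Normalized face weight `W̄(a,b;d,c|u)` (arguments ordered (NW, NE; SW, SE)). -/
def Wb (τ : ℂ) (r : ℝ) (u : ℂ) (a b d c : ℤ) : ℂ :=
  if b = a + 1 ∧ d = a + 1 ∧ c = a + 2 then 1
  else if b = a - 1 ∧ d = a - 1 ∧ c = a - 2 then 1
  else if b = a + 1 ∧ d = a + 1 ∧ c = a then
    br τ r ((a : ℂ) - u) * br τ r 1 / (br τ r (a : ℂ) * br τ r (1 + u))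
  else if b = a - 1 ∧ d = a - 1 ∧ c = a then
    br τ r ((a : ℂ) + u) * br τ r 1 / (br τ r (a : ℂ) * br τ r (1 + u))
  else if b = a + 1 ∧ d = a - 1 ∧ c = a then
    br τ r ((a : ℂ) + 1) * br τ r u / (br τ r (a : ℂ) * br τ r (1 + u))
  else if b = a - 1 ∧ d = a + 1 ∧ c = a then
    br τ r ((a : ℂ) - 1) * br τ r u / (br τ r (a : ℂ) * br τ r (1 + u))
  else 0

/-- Sequence with prescribed endpoints `d`, `c` and free interior values `f`. -/
def seqI (k : ℕ) (d c : ℤ) (f : Fin (k - 1) → ℤ) (j : ℕ) : ℤ :=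
  if h0 : j = 0 then d
  else if hj : j < k then f ⟨j - 1, by omega⟩ else c

/-- Fused face weight `W^{(k,1)}(a,b;d,c|u)`. -/
def Wk1 (τ : ℂ) (r : ℝ) (k : ℕ) (u : ℂ) (a b d c : ℤ) : ℂ :=
  if adm k a b then
    ∑' f : Fin (k - 1) → ℤ,
      ∏ j ∈ Finset.range k,
        Wb τ r (u + (k : ℂ) - ((j : ℂ) + 1))
          (cpathZ a (((k : ℤ) - (a - b)) / 2) j)
          (cpathZ a (((k : ℤ) - (a - b)) / 2) (j + 1))
          (seqI k d c f j) (seqI k d c f (j + 1))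
  else 0

/-- Fused face weight `W^{(k,l)}(a,b;d,c|u)`. -/
def Wkl (τ : ℂ) (r : ℝ) (k l : ℕ) (u : ℂ) (a b d c : ℤ) : ℂ :=
  if adm l b c then
    ∑' g : Fin (l - 1) → ℤ,
      ∏ i ∈ Finset.range l,
        Wk1 τ r k (u - (l : ℂ) + ((i : ℂ) + 1))
          (seqI l a d g i) (cpathZ b (((l : ℤ) - (b - c)) / 2) i)
          (seqI l a d g (i + 1)) (cpathZ b (((l : ℤ) - (b - c)) / 2) (i + 1))
  else 0

/-- Eight-vertex weight `ā(u)`. -/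
def aw (τ : ℂ) (r : ℝ) (u : ℂ) : ℂ :=
  th2 (1 / (2 * (r : ℂ))) (τ / 2) * th2 (u / (2 * (r : ℂ))) (τ / 2) /
    (th2 0 (τ / 2) * th2 ((1 + u) / (2 * (r : ℂ))) (τ / 2))

/-- Eight-vertex weight `b̄(u)`. -/
def bw (τ : ℂ) (r : ℝ) (u : ℂ) : ℂ :=
  th2 (1 / (2 * (r : ℂ))) (τ / 2) * th1 (u / (2 * (r : ℂ))) (τ / 2) /
    (th2 0 (τ / 2) * th1 ((1 + u) / (2 * (r : ℂ))) (τ / 2))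

/-- Eight-vertex weight `c̄(u)`. -/
def cw (τ : ℂ) (r : ℝ) (u : ℂ) : ℂ :=
  th1 (1 / (2 * (r : ℂ))) (τ / 2) * th2 (u / (2 * (r : ℂ))) (τ / 2) /
    (th2 0 (τ / 2) * th1 ((1 + u) / (2 * (r : ℂ))) (τ / 2))

/-- Eight-vertex weight `d̄(u)`. -/
def dw (τ : ℂ) (r : ℝ) (u : ℂ) : ℂ :=
  -(th1 (1 / (2 * (r : ℂ))) (τ / 2) * th1 (u / (2 * (r : ℂ))) (τ / 2)) /
    (th2 0 (τ / 2) * th2 ((1 + u) / (2 * (r : ℂ))) (τ / 2))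

/-- The normalized eight-vertex `R`-matrix entry `R̄(u)_{(ε₁,ε₂),(ε₁',ε₂')}`. -/
def Rbar (τ : ℂ) (r : ℝ) (u : ℂ) (e1 e2 e1' e2' : ℤ) : ℂ :=
  if e1' = e1 ∧ e2' = e2 ∧ e1 = e2 then aw τ r u
  else if e1' = e1 ∧ e2' = e2 ∧ e1 = -e2 then bw τ r u
  else if e1' = e2 ∧ e2' = e1 ∧ e1 = -e2 then cw τ r u
  else if e1' = -e1 ∧ e2' = -e2 ∧ e1 = e2 then dw τ r u
  else 0

/-- Sklyanin standard-basis vector `v_+(z)`. -/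
def vp (τ z : ℂ) : ℂ := th3 (2 * z) (2 * τ) - th2 (2 * z) (2 * τ)

/-- Sklyanin standard-basis vector `v_-(z)`. -/
def vm (τ z : ℂ) : ℂ := th3 (2 * z) (2 * τ) + th2 (2 * z) (2 * τ)

/-!
By the Jacobi triple product, `Θ_p` and all four theta functions are Mathlib's `jacobiTheta₂` up to
exponential factors, and its modular transformation turns the bracket `[u]` into a constant multiple
of `ϑ₁(u/r | τ)`. Splitting the double series of `ϑ(x + y | σ) ϑ(x - y | σ)` by parity expresses
such a product as a bilinear form in `ϑ₂` and `ϑ₃` at `2σ`. With `σ = τ/2`, every vertex and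
intertwining factor becomes such a form at the modulus `τ` of the brackets. For equal spins `+1` and
the first step `a → a + 1`, the correspondence is then a polynomial identity when the path goes
straight on to `a + 2`, and a combination of two three-term theta relations when it turns back to
`a`. Shifting `u` or `v` by the half period `r` flips a spin, and negating all heights reverses the
first step, so this covers every case.
-/

section GaussianBinomial

/-- The Gaussian binomial coefficient, defined by the `q`-Pascal rule. -/
def gaussBinom {R : Type*} [CommSemiring R] (q : R) : ℕ → ℕ → R
  | _, 0 => 1
  | 0, _ + 1 => 0
  | n + 1, k + 1 => gaussBinom q n k + q ^ (k + 1) * gaussBinom q n (k + 1)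

/-- The `q`-Pochhammer symbol `(q; q)_n`. -/
def qPochhammer {R : Type*} [CommRing R] (q : R) (n : ℕ) : R :=
  ∏ i ∈ range n, (1 - q ^ (i + 1))

lemma gaussBinom_zero_right {R : Type*} [CommSemiring R] (q : R) (n : ℕ) :
    gaussBinom q n 0 = 1 := by
  cases n <;> rfl

lemma gaussBinom_eq_zero_of_lt {R : Type*} [CommSemiring R] (q : R) :
    ∀ {n k : ℕ}, n < k → gaussBinom q n k = 0
  | 0, _ + 1, _ => rfl
  | n + 1, k + 1, h => by
    rw [gaussBinom, gaussBinom_eq_zero_of_lt q (Nat.lt_of_succ_lt_succ h),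
      gaussBinom_eq_zero_of_lt q (Nat.lt_of_succ_lt h), mul_zero, add_zero]

/-- Rothe's `q`-binomial theorem. -/
lemma prod_one_add_mul_pow {R : Type*} [CommSemiring R] (q : R) (n : ℕ) (y : R) :
    ∏ j ∈ range n, (1 + y * q ^ j) =
      ∑ k ∈ range (n + 1), gaussBinom q n k * q ^ k.choose 2 * y ^ k := by
  induction n generalizing y with
  | zero => simp [gaussBinom]
  | succ n ih =>
    have shift_prod : ∏ j ∈ range n, (1 + y * q ^ (j + 1)) =
        ∑ k ∈ range (n + 1), gaussBinom q n k * q ^ k.choose 2 * (y * q) ^ k := by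
      rw [← ih]
      exact prod_congr rfl fun j _ => by rw [pow_succ', mul_assoc]
    have drop_zero : ∑ k ∈ range (n + 1), gaussBinom q n k * q ^ k.choose 2 * (y * q) ^ k =
        1 + ∑ k ∈ range (n + 1),
          gaussBinom q n (k + 1) * q ^ (k + 1).choose 2 * (y * q) ^ (k + 1) := by
      rw [sum_range_succ', sum_range_succ _ n, gaussBinom_eq_zero_of_lt q n.lt_succ_self]
      simp [gaussBinom_zero_right, add_comm]
    rw [prod_range_succ', shift_prod, pow_zero, mul_one, mul_add, mul_one]
    nth_rw 1 [drop_zero]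
    rw [sum_range_succ' _ (n + 1), gaussBinom_zero_right, sum_mul, add_assoc, ← sum_add_distrib,
      add_comm]
    simp only [Nat.choose_zero_succ, pow_zero, mul_one]
    refine congrArg (· + 1) (sum_congr rfl fun k _ => ?_)
    rw [gaussBinom, Nat.choose_succ_succ' k 1, Nat.choose_one_right]
    ring

lemma qPochhammer_succ {R : Type*} [CommRing R] (q : R) (n : ℕ) :
    qPochhammer q (n + 1) = qPochhammer q n * (1 - q ^ (n + 1)) :=
  prod_range_succ _ n

lemma gaussBinom_add_mul_qPochhammer {R : Type*} [CommRing R] (q : R) :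
    ∀ m n : ℕ, gaussBinom q (m + n) n * (qPochhammer q m * qPochhammer q n) =
      qPochhammer q (m + n)
  | m, 0 => by simp [gaussBinom_zero_right, qPochhammer]
  | 0, n + 1 => by
    have diagonal := gaussBinom_add_mul_qPochhammer q 0 n
    rw [zero_add] at diagonal ⊢
    rw [gaussBinom, gaussBinom_eq_zero_of_lt q n.lt_succ_self, qPochhammer_succ]
    linear_combination (1 - q ^ (n + 1)) * diagonal
  | m + 1, n + 1 => by
    have left := gaussBinom_add_mul_qPochhammer q (m + 1) n
    have right := gaussBinom_add_mul_qPochhammer q m (n + 1)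
    rw [add_right_comm m 1 n] at left
    rw [← add_assoc m n 1] at right
    rw [← add_assoc (m + 1) n 1, add_right_comm m 1 n, gaussBinom, qPochhammer_succ q (m + n + 1)]
    rw [qPochhammer_succ q m] at left ⊢
    rw [qPochhammer_succ q n] at right ⊢
    linear_combination (1 - q ^ (n + 1)) * left + q ^ (n + 1) * (1 - q ^ (m + 1)) * right

lemma two_mul_choose_two_add_self (n : ℕ) : 2 * n.choose 2 + n = n ^ 2 := by
  induction n with
  | zero => rfl
  | succ n ih =>
    rw [Nat.choose_succ_succ' n 1, Nat.choose_one_right]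
    linarith

lemma zpow_sub_sq {K : Type*} [Field K] {q : K} (hq : q ≠ 0) (m n : ℕ) :
    q ^ ((m : ℤ) - n) ^ 2 = (q ^ 2) ^ m.choose 2 * q ^ m * q ^ n ^ 2 / ((q ^ 2) ^ n) ^ m := by
  have exponent : ((m : ℤ) - n) ^ 2 = (2 * m.choose 2 + m + n ^ 2 : ℕ) - (2 * n * m : ℕ) := by
    rw [two_mul_choose_two_add_self]
    push_cast
    ring
  rw [exponent, zpow_sub₀ hq, zpow_natCast, zpow_natCast]
  ring

lemma prod_one_add_div_pow_odd {K : Type*} [Field K] {q z : K} (hq : q ≠ 0) (hz : z ≠ 0) (n : ℕ) :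
    ∏ j ∈ range n, (1 + z / q ^ (2 * j + 1)) =
      z ^ n / q ^ n ^ 2 * ∏ j ∈ range n, (1 + q ^ (2 * j + 1) / z) := by
  induction n with
  | zero => simp
  | succ n ih =>
    rw [prod_range_succ, prod_range_succ, ih]
    field_simp
    ring

lemma prod_one_add_mul_prod_one_add_div {K : Type*} [Field K] {q z : K} (hq : q ≠ 0)
    (hz : z ≠ 0) (n : ℕ) :
    (∏ j ∈ range n, (1 + q ^ (2 * j + 1) * z)) * ∏ j ∈ range n, (1 + q ^ (2 * j + 1) / z) =
      ∑ k ∈ range (2 * n + 1),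
        gaussBinom (q ^ 2) (2 * n) k * (q ^ (((k : ℤ) - n) ^ 2) * z ^ ((k : ℤ) - n)) := by
  have rothe := prod_one_add_mul_pow (q ^ 2) (2 * n) (z * q / (q ^ 2) ^ n)
  have upper_half : ∏ j ∈ range n, (1 + z * q / (q ^ 2) ^ n * (q ^ 2) ^ (n + j)) =
      ∏ j ∈ range n, (1 + q ^ (2 * j + 1) * z) :=
    prod_congr rfl fun j _ => by
      field_simp
      ring
  have lower_half : ∏ j ∈ range n, (1 + z * q / (q ^ 2) ^ n * (q ^ 2) ^ j) =
      z ^ n / q ^ n ^ 2 * ∏ j ∈ range n, (1 + q ^ (2 * j + 1) / z) := by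
    rw [← prod_one_add_div_pow_odd hq hz, ← prod_range_reflect]
    refine prod_congr rfl fun j hj => ?_
    obtain ⟨i, rfl⟩ := Nat.exists_eq_add_of_lt (mem_range.mp hj)
    rw [show j + i + 1 - 1 - j = i by omega]
    field_simp
    ring
  rw [two_mul n, prod_range_add, lower_half, upper_half, ← two_mul n] at rothe
  have prefactor_ne_zero : z ^ n / q ^ n ^ 2 ≠ 0 := by positivity
  refine mul_left_cancel₀ prefactor_ne_zero ?_
  rw [mul_comm (∏ j ∈ range n, (1 + q ^ (2 * j + 1) * z)), ← mul_assoc, rothe, mul_sum]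
  refine sum_congr rfl fun k _ => ?_
  rw [zpow_sub_sq hq, zpow_sub₀ hz, zpow_natCast, zpow_natCast, div_pow, mul_pow]
  field_simp

/-- The Gaussian binomial coefficient `2 n` over `n + k`, extended by zero to `|k| > n`. -/
def centralGaussBinom {R : Type*} [CommSemiring R] (q : R) (n : ℕ) (k : ℤ) : R :=
  if |k| ≤ n then gaussBinom q (2 * n) (n + k).toNat else 0

lemma prod_one_add_mul_prod_one_add_div_eq_tsum {K : Type*} [Field K] [TopologicalSpace K]
    {q z : K} (hq : q ≠ 0) (hz : z ≠ 0) (n : ℕ) :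
    (∏ j ∈ range n, (1 + q ^ (2 * j + 1) * z)) * ∏ j ∈ range n, (1 + q ^ (2 * j + 1) / z) =
      ∑' k : ℤ, centralGaussBinom (q ^ 2) n k * (q ^ (k ^ 2) * z ^ k) := by
  have support {k : ℤ} (hk : k ∉ Icc (-(n : ℤ)) n) :
      centralGaussBinom (q ^ 2) n k * (q ^ (k ^ 2) * z ^ k) = 0 := by
    rw [mem_Icc, ← abs_le] at hk
    rw [centralGaussBinom, if_neg hk, zero_mul]
  rw [prod_one_add_mul_prod_one_add_div hq hz, tsum_eq_sum fun _ => support]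
  refine sum_nbij' (fun k => (k : ℤ) - n) (fun k => (n + k).toNat) ?_ ?_ ?_ ?_ ?_
  iterate 4 grind
  intro k hk
  rw [centralGaussBinom, if_pos (by grind), add_sub_cancel, Int.toNat_natCast]

end GaussianBinomial

section JacobiTripleProduct

open Filter Topology

variable {𝕜 : Type*} [NormedField 𝕜] {q : 𝕜}

lemma one_sub_pow_succ_ne_zero (hq : ‖q‖ < 1) (n : ℕ) : 1 - q ^ (n + 1) ≠ 0 := by
  intro h
  have norm_eq_one : ‖q‖ ^ (n + 1) = 1 := by rw [← norm_pow, ← sub_eq_zero.mp h, norm_one]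
  exact (pow_lt_one₀ (norm_nonneg q) hq n.succ_ne_zero).ne norm_eq_one

lemma qPochhammer_ne_zero (hq : ‖q‖ < 1) (n : ℕ) : qPochhammer q n ≠ 0 :=
  prod_ne_zero_iff.mpr fun i _ => one_sub_pow_succ_ne_zero hq i

lemma summable_norm_mul_pow (hq : ‖q‖ < 1) (c : 𝕜) : Summable fun n : ℕ => ‖c * q ^ n‖ := by
  simp only [norm_mul, norm_pow]
  exact (summable_geometric_of_lt_one (norm_nonneg q) hq).mul_left ‖c‖

lemma multipliable_one_add_mul_pow [CompleteSpace 𝕜] (hq : ‖q‖ < 1) (c : 𝕜) :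
    Multipliable fun n : ℕ => 1 + c * q ^ n :=
  multipliable_one_add_of_summable (summable_norm_mul_pow hq c)

lemma multipliable_one_sub_mul_pow_succ [CompleteSpace 𝕜] (hq : ‖q‖ < 1) (c : 𝕜) :
    Multipliable fun n : ℕ => 1 - c * q ^ (n + 1) :=
  (multipliable_one_add_mul_pow hq (-(c * q))).congr fun n => by ring

lemma tprod_one_sub_mul_pow [CompleteSpace 𝕜] (hq : ‖q‖ < 1) (c : 𝕜) :
    ∏' n : ℕ, (1 - c * q ^ n) = (1 - c) * ∏' n : ℕ, (1 - c * q ^ (n + 1)) := by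
  rw [tprod_eq_zero_mul' (f := fun n => 1 - c * q ^ n) (multipliable_one_sub_mul_pow_succ hq c),
    pow_zero, mul_one]

lemma tprod_one_sub_pow_succ_ne_zero [CompleteSpace 𝕜] (hq : ‖q‖ < 1) :
    ∏' n : ℕ, (1 - q ^ (n + 1)) ≠ 0 := by
  simp_rw [sub_eq_add_neg]
  refine tprod_one_add_ne_zero_of_summable (fun n => ?_) ?_
  · simpa only [← sub_eq_add_neg] using one_sub_pow_succ_ne_zero hq n
  · simpa only [norm_neg, pow_succ'] using summable_norm_mul_pow hq q

lemma tendsto_qPochhammer [CompleteSpace 𝕜] (hq : ‖q‖ < 1) :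
    Tendsto (qPochhammer q) atTop (𝓝 (∏' n : ℕ, (1 - q ^ (n + 1)))) := by
  have products_tendsto := (multipliable_one_sub_mul_pow_succ hq 1).tendsto_prod_tprod_nat
  simp only [one_mul] at products_tendsto
  exact products_tendsto

lemma centralGaussBinom_eq_div (hq : ‖q‖ < 1) {n : ℕ} {k : ℤ} (hk : |k| ≤ n) :
    centralGaussBinom q n k = qPochhammer q (2 * n) *
      ((qPochhammer q (n - k).toNat)⁻¹ * (qPochhammer q (n + k).toNat)⁻¹) := by
  have sum_eq : (n - k).toNat + (n + k).toNat = 2 * n := by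
    rw [abs_le] at hk
    omega
  rw [centralGaussBinom, if_pos hk, ← sum_eq, ← gaussBinom_add_mul_qPochhammer]
  field_simp [qPochhammer_ne_zero hq]

lemma exists_norm_centralGaussBinom_le [CompleteSpace 𝕜] (hq : ‖q‖ < 1) :
    ∃ C : ℝ, ∀ n k, ‖centralGaussBinom q n k‖ ≤ C := by
  have inv_tendsto := ((tendsto_qPochhammer hq).inv₀ (tprod_one_sub_pow_succ_ne_zero hq)).norm
  obtain ⟨B, hB⟩ := (tendsto_qPochhammer hq).norm.bddAbove_range
  obtain ⟨D, hD⟩ := inv_tendsto.bddAbove_range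
  replace hB n : ‖qPochhammer q n‖ ≤ B := hB ⟨n, rfl⟩
  replace hD n : ‖(qPochhammer q n)⁻¹‖ ≤ D := hD ⟨n, rfl⟩
  have hB₀ : 0 ≤ B := (norm_nonneg _).trans (hB 0)
  have hD₀ : 0 ≤ D := (norm_nonneg _).trans (hD 0)
  refine ⟨B * (D * D), fun n k => ?_⟩
  by_cases hk : |k| ≤ n
  · rw [centralGaussBinom_eq_div hq hk, norm_mul, norm_mul]
    exact mul_le_mul (hB _) (mul_le_mul (hD _) (hD _) (norm_nonneg _) hD₀) (by positivity) hB₀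
  · rw [centralGaussBinom, if_neg hk, norm_zero]
    positivity

lemma tendsto_centralGaussBinom [CompleteSpace 𝕜] (hq : ‖q‖ < 1) (k : ℤ) :
    Tendsto (fun n => centralGaussBinom q n k) atTop (𝓝 (∏' n : ℕ, (1 - q ^ (n + 1)))⁻¹) := by
  have limit_ne_zero := tprod_one_sub_pow_succ_ne_zero hq
  have double_atTop : Tendsto (fun n : ℕ => 2 * n) atTop atTop :=
    tendsto_id.const_mul_atTop' two_pos
  have shift_atTop (m : ℤ) : Tendsto (fun n : ℕ => ((n : ℤ) + m).toNat) atTop atTop :=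
    tendsto_atTop.mpr fun b => by
      filter_upwards [eventually_ge_atTop (b + m.natAbs)] with n hn
      omega
  have quotient := ((tendsto_qPochhammer hq).comp double_atTop).mul
    ((((tendsto_qPochhammer hq).comp (shift_atTop (-k))).inv₀ limit_ne_zero).mul
      (((tendsto_qPochhammer hq).comp (shift_atTop k)).inv₀ limit_ne_zero))
  rw [mul_inv_cancel_left₀ limit_ne_zero] at quotient
  refine quotient.congr' ?_
  filter_upwards [eventually_ge_atTop k.natAbs] with n hn
  rw [centralGaussBinom_eq_div hq (k.abs_eq_natAbs ▸ Int.ofNat_le.mpr hn), sub_eq_add_neg]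
  rfl

lemma summable_norm_pow_sq_mul_pow (hq : ‖q‖ < 1) (z : 𝕜) :
    Summable fun n : ℕ => ‖q ^ n ^ 2 * z ^ n‖ := by
  have ratio_tendsto : Tendsto (fun n : ℕ => ‖q‖ ^ n * ‖z‖) atTop (𝓝 0) := by
    simpa using (tendsto_pow_atTop_nhds_zero_of_lt_one (norm_nonneg q) hq).mul_const ‖z‖
  refine summable_geometric_two.of_norm_bounded_eventually_nat ?_
  filter_upwards [ratio_tendsto.eventually_le_const one_half_pos] with n hn
  calc ‖‖q ^ n ^ 2 * z ^ n‖‖ = (‖q‖ ^ n * ‖z‖) ^ n := by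
        rw [norm_norm, norm_mul, norm_pow, norm_pow, sq, pow_mul, mul_pow]
    _ ≤ (1 / 2) ^ n := pow_le_pow_left₀ (by positivity) hn n

lemma summable_norm_zpow_sq_mul_zpow (hq : ‖q‖ < 1) (z : 𝕜) :
    Summable fun k : ℤ => ‖q ^ (k ^ 2) * z ^ k‖ := by
  refine .of_nat_of_neg ?_ ?_
  · exact_mod_cast summable_norm_pow_sq_mul_pow hq z
  · refine (summable_norm_pow_sq_mul_pow hq z⁻¹).congr fun n => ?_
    rw [neg_sq, zpow_neg, zpow_natCast, inv_pow]
    norm_cast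

theorem jacobi_triple_product [CompleteSpace 𝕜] {z : 𝕜} (hq : ‖q‖ < 1) (hz : z ≠ 0) :
    (∏' n : ℕ, (1 - (q ^ 2) ^ (n + 1))) *
        ((∏' n : ℕ, (1 + q ^ (2 * n + 1) * z)) * ∏' n : ℕ, (1 + q ^ (2 * n + 1) / z)) =
      ∑' k : ℤ, q ^ (k ^ 2) * z ^ k := by
  rcases eq_or_ne q 0 with rfl | hq₀
  · rw [tsum_eq_single 0 fun k hk => by rw [zero_zpow _ (pow_ne_zero 2 hk), zero_mul]]
    simp
  have hq_sq : ‖q ^ 2‖ < 1 := by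
    rw [norm_pow]
    exact pow_lt_one₀ (norm_nonneg q) hq two_ne_zero
  have multipliable_odd (c : 𝕜) : Multipliable fun n : ℕ => 1 + q ^ (2 * n + 1) * c :=
    (multipliable_one_add_mul_pow hq_sq (q * c)).congr fun n => by ring
  have products_tendsto := (multipliable_odd z).tendsto_prod_tprod_nat.mul
    (multipliable_odd z⁻¹).tendsto_prod_tprod_nat
  simp_rw [← div_eq_mul_inv, prod_one_add_mul_prod_one_add_div_eq_tsum hq₀ hz] at products_tendsto
  obtain ⟨C, hC⟩ := exists_norm_centralGaussBinom_le hq_sq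
  have sums_tendsto : Tendsto
      (fun n => ∑' k : ℤ, centralGaussBinom (q ^ 2) n k * (q ^ (k ^ 2) * z ^ k)) atTop
      (𝓝 (∑' k : ℤ, (∏' n : ℕ, (1 - (q ^ 2) ^ (n + 1)))⁻¹ * (q ^ (k ^ 2) * z ^ k))) := by
    refine tendsto_tsum_of_dominated_convergence
      ((summable_norm_zpow_sq_mul_zpow hq z).mul_left C)
      (fun k => (tendsto_centralGaussBinom hq_sq k).mul_const _)
      (.of_forall fun n k => ?_)
    rw [norm_mul]
    exact mul_le_mul_of_nonneg_right (hC n k) (norm_nonneg _)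
  rw [tendsto_nhds_unique products_tendsto sums_tendsto, tsum_mul_left,
    mul_inv_cancel_left₀ (tprod_one_sub_pow_succ_ne_zero hq_sq)]

end JacobiTripleProduct

section JacobiTheta

open scoped Real

lemma Theta_eq_mul_tprod {p : ℂ} (hp : ‖p‖ < 1) (z : ℂ) :
    Theta p z = (∏' n : ℕ, (1 - p ^ (n + 1))) *
      ((∏' n : ℕ, (1 - z * p ^ n)) * ∏' n : ℕ, (1 - z⁻¹ * p ^ (n + 1))) := by
  have multipliable_mul : Multipliable fun n : ℕ => 1 - z * p ^ n :=
    (multipliable_one_add_mul_pow hp (-z)).congr fun n => by ring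
  have multipliable_inv_mul := multipliable_one_sub_mul_pow_succ hp z⁻¹
  have multipliable_one : Multipliable fun n : ℕ => 1 - p ^ (n + 1) :=
    (multipliable_one_sub_mul_pow_succ hp 1).congr fun n => by ring
  simp_rw [Theta, div_eq_inv_mul]
  rw [(multipliable_mul.mul multipliable_inv_mul).tprod_mul multipliable_one,
    multipliable_mul.tprod_mul multipliable_inv_mul, mul_comm]

lemma Theta_sq_neg_mul {q z : ℂ} (hq : ‖q‖ < 1) (hq₀ : q ≠ 0) (hz : z ≠ 0) :
    Theta (q ^ 2) (-(q * z)) = ∑' k : ℤ, q ^ (k ^ 2) * z ^ k := by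
  have hq_sq : ‖q ^ 2‖ < 1 := by
    rw [norm_pow]
    exact pow_lt_one₀ (norm_nonneg q) hq two_ne_zero
  rw [Theta_eq_mul_tprod hq_sq, ← jacobi_triple_product hq hz]
  congr 3 <;> funext n
  · ring
  · field_simp
    ring

lemma norm_exp_pi_mul_I_mul_lt_one {σ : ℂ} (hσ : 0 < σ.im) : ‖exp (π * I * σ)‖ < 1 := by
  rw [norm_exp, Real.exp_lt_one_iff]
  simpa using mul_pos Real.pi_pos hσ

lemma exp_two_pi_mul_I_mul (σ : ℂ) : exp (2 * π * I * σ) = exp (π * I * σ) ^ 2 := by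
  rw [← exp_nat_mul]
  push_cast
  ring_nf

lemma norm_exp_two_pi_mul_I_mul_lt_one {σ : ℂ} (hσ : 0 < σ.im) : ‖exp (2 * π * I * σ)‖ < 1 := by
  rw [exp_two_pi_mul_I_mul, norm_pow]
  exact pow_lt_one₀ (norm_nonneg _) (norm_exp_pi_mul_I_mul_lt_one hσ) two_ne_zero

lemma Theta_exp {σ : ℂ} (hσ : 0 < σ.im) (v : ℂ) :
    Theta (exp (2 * π * I * σ)) (exp (2 * π * I * v)) = jacobiTheta₂ (v + 1 / 2 - σ / 2) σ := by
  have argument : exp (2 * π * I * v) =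
      -(exp (π * I * σ) * exp (2 * π * I * (v + 1 / 2 - σ / 2))) := by
    rw [← exp_add, show π * I * σ + 2 * π * I * (v + 1 / 2 - σ / 2) = 2 * π * I * v + π * I by ring,
      exp_add_pi_mul_I, neg_neg]
  rw [exp_two_pi_mul_I_mul, argument,
    Theta_sq_neg_mul (norm_exp_pi_mul_I_mul_lt_one hσ) (exp_ne_zero _) (exp_ne_zero _)]
  refine tsum_congr fun k => ?_
  rw [jacobiTheta₂_term, ← exp_int_mul, ← exp_int_mul, ← exp_add]
  push_cast
  ring_nf

lemma one_sub_two_mul_cos_add_sq (x v : ℂ) :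
    1 - 2 * x * cos (2 * π * v) + x ^ 2 =
      (1 - exp (2 * π * I * v) * x) * (1 - (exp (2 * π * I * v))⁻¹ * x) := by
  have cos_eq : 2 * cos (2 * π * v) = exp (2 * π * I * v) + (exp (2 * π * I * v))⁻¹ := by
    rw [two_cos, ← exp_neg]
    ring_nf
  linear_combination (-x) * cos_eq - x ^ 2 * mul_inv_cancel₀ (exp_ne_zero (2 * π * I * v))

lemma two_mul_sin_pi_mul (v : ℂ) :
    2 * sin (π * v) = I * exp (-(π * I * v)) * (1 - exp (2 * π * I * v)) := by
  rw [two_sin, mul_comm _ I, mul_assoc I (exp _), mul_one_sub, ← exp_add]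
  ring_nf

lemma th1_eq_Theta {σ : ℂ} (hσ : 0 < σ.im) (v : ℂ) :
    th1 v σ =
      I * exp (π * I * (σ / 4 - v)) * Theta (exp (2 * π * I * σ)) (exp (2 * π * I * v)) := by
  have hp := norm_exp_two_pi_mul_I_mul_lt_one hσ
  have prefactor : exp (π * I * (σ / 4 - v)) =
      exp (2 * π * I * σ / 8) * exp (-(π * I * v)) := by
    rw [← exp_add]
    ring_nf
  rw [th1, Theta_eq_mul_tprod hp, tprod_one_sub_mul_pow hp, prefactor]
  simp_rw [pow_mul', one_sub_two_mul_cos_add_sq]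
  rw [(multipliable_one_sub_mul_pow_succ hp _).tprod_mul (multipliable_one_sub_mul_pow_succ hp _)]
  generalize ∏' n : ℕ, (1 - exp (2 * π * I * σ) ^ (n + 1)) = P
  generalize ∏' n : ℕ, (1 - exp (2 * π * I * v) * exp (2 * π * I * σ) ^ (n + 1)) = A
  generalize ∏' n : ℕ, (1 - (exp (2 * π * I * v))⁻¹ * exp (2 * π * I * σ) ^ (n + 1)) = B
  linear_combination exp (2 * π * I * σ / 8) * P * (A * B) * two_mul_sin_pi_mul v

lemma th1_eq_jacobiTheta₂ {σ : ℂ} (hσ : 0 < σ.im) (v : ℂ) :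
    th1 v σ = I * exp (π * I * (σ / 4 - v)) * jacobiTheta₂ (v + 1 / 2 - σ / 2) σ := by
  rw [th1_eq_Theta hσ, Theta_exp hσ]

lemma exp_pi_mul_I_mul_add_half (x : ℂ) : exp (π * I * (x + 1 / 2)) = I * exp (π * I * x) := by
  rw [mul_add, exp_add, mul_comm, show π * I * (1 / 2) = π / 2 * I by ring, exp_pi_div_two_mul_I]

lemma th3_eq_jacobiTheta₂ {σ : ℂ} (hσ : 0 < σ.im) (v : ℂ) : th3 v σ = jacobiTheta₂ v σ := by
  rw [th3, th1_eq_jacobiTheta₂ hσ, ← exp_pi_mul_I_mul_add_half, ← mul_assoc, ← exp_add,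
    show v + (σ + 1) / 2 + 1 / 2 - σ / 2 = v + 1 by ring, jacobiTheta₂_add_left]
  ring_nf
  rw [exp_zero, one_mul]

lemma th2_eq_jacobiTheta₂ {σ : ℂ} (hσ : 0 < σ.im) (v : ℂ) :
    th2 v σ = exp (π * I * (σ / 4 + v)) * jacobiTheta₂ (v + σ / 2) σ := by
  rw [show v + σ / 2 = v - σ / 2 + σ by ring, jacobiTheta₂_add_left', ← mul_assoc, ← exp_add,
    th2, th1_eq_jacobiTheta₂ hσ, ← exp_pi_mul_I_mul_add_half,
    show v + 1 / 2 + 1 / 2 - σ / 2 = v - σ / 2 + 1 by ring, jacobiTheta₂_add_left]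
  ring_nf

lemma th1_neg (v σ : ℂ) : th1 (-v) σ = -th1 v σ := by
  simp only [th1, mul_neg, Complex.sin_neg, Complex.cos_neg, neg_mul]

lemma th1_add_one (v σ : ℂ) : th1 (v + 1) σ = -th1 v σ := by
  have sin_arg : (π : ℂ) * (v + 1) = π * v + π := by ring
  have cos_arg : 2 * (π : ℂ) * (v + 1) = 2 * π * v + 2 * π := by ring
  simp only [th1, sin_arg, cos_arg, Complex.sin_add_pi, Complex.cos_add_two_pi, mul_neg, neg_mul]

lemma th1_add_half (v σ : ℂ) : th1 (v + 1 / 2) σ = th2 v σ := rfl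

lemma th2_add_half (v σ : ℂ) : th2 (v + 1 / 2) σ = -th1 v σ := by
  rw [th2, ← th1_add_one]
  ring_nf

lemma th2_neg (v σ : ℂ) : th2 (-v) σ = th2 v σ := by
  rw [th2, th2, ← neg_neg (v + 1 / 2), th1_neg, ← th1_add_one]
  ring_nf

lemma th3_add_half (v σ : ℂ) : th3 (v + 1 / 2) σ = th0 v σ := by
  rw [th3, th0, add_right_comm v, exp_pi_mul_I_mul_add_half,
    show v + 1 / 2 + (σ + 1) / 2 = v + σ / 2 + 1 by ring, th1_add_one]
  ring

lemma th0_add_half (v σ : ℂ) : th0 (v + 1 / 2) σ = th3 v σ := by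
  rw [th3, th0, add_right_comm v, exp_pi_mul_I_mul_add_half, ← mul_assoc, neg_mul, I_mul_I,
    neg_neg, one_mul, show v + 1 / 2 + σ / 2 = v + (σ + 1) / 2 by ring]

lemma th3_add_one (v σ : ℂ) : th3 (v + 1) σ = th3 v σ := by
  rw [← th0_add_half v, ← th3_add_half]
  ring_nf

lemma th2_add_one (v σ : ℂ) : th2 (v + 1) σ = -th2 v σ := by
  rw [← th1_add_half, ← th1_add_half, ← th1_add_one]
  ring_nf

lemma th3_neg {σ : ℂ} (hσ : 0 < σ.im) (v : ℂ) : th3 (-v) σ = th3 v σ := by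
  rw [th3_eq_jacobiTheta₂ hσ, th3_eq_jacobiTheta₂ hσ, jacobiTheta₂_neg_left]

lemma th0_neg {σ : ℂ} (hσ : 0 < σ.im) (v : ℂ) : th0 (-v) σ = th0 v σ := by
  rw [← th3_add_half v, ← th3_neg hσ, ← th3_add_one, ← th3_add_half]
  ring_nf

end JacobiTheta

section Bracket

open scoped Real

lemma neg_I_mul_cpow_half {τ : ℂ} (hτ : 0 < τ.im) :
    (-I * τ) ^ (1 / 2 : ℂ) = exp (-π * I / 4) * τ ^ (1 / 2 : ℂ) := by
  have hτ₀ : τ ≠ 0 := fun h => hτ.ne' (h ▸ zero_im)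
  have arg_mem : arg (-I) + arg τ ∈ Set.Ioc (-π) π := by
    have arg_nonneg := arg_nonneg_iff.mpr hτ.le
    have arg_le := arg_le_pi τ
    rw [arg_neg_I]
    constructor <;> linarith [Real.pi_pos]
  rw [cpow_def_of_ne_zero (mul_ne_zero (neg_ne_zero.mpr I_ne_zero) hτ₀), cpow_def_of_ne_zero hτ₀,
    log_mul (neg_ne_zero.mpr I_ne_zero) hτ₀ arg_mem, log_neg_I, ← exp_add]
  ring_nf

lemma im_neg_one_div_pos {τ : ℂ} (hτ : 0 < τ.im) : 0 < (-1 / τ).im := by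
  rw [neg_div, one_div, ← inv_neg]
  exact UpperHalfPlane.im_inv_neg_coe_pos ⟨τ, hτ⟩

lemma br_eq_mul_th1 {τ : ℂ} {r : ℝ} (hτ : 0 < τ.im) (hr : r ≠ 0) (u : ℂ) :
    br τ r u = Cc τ r * th1 (u / r) τ := by
  have hr₀ : (r : ℂ) ≠ 0 := ofReal_ne_zero.mpr hr
  have hτ₀ : τ ≠ 0 := fun h => hτ.ne' (h ▸ zero_im)
  have nome : xp τ r (2 * r) = exp (2 * π * I * (-1 / τ)) := by
    rw [xp]
    congr 1
    field_simp
  have argument : xp τ r (2 * u) = exp (2 * π * I * (-(u / r) / τ)) := by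
    rw [xp]
    congr 1
    field_simp
  have reflection : jacobiTheta₂ (u / r + 1 / 2 - τ / 2) τ =
      jacobiTheta₂ (-(u / r) + τ / 2 + 1 / 2) τ := by
    rw [← jacobiTheta₂_neg_left, ← jacobiTheta₂_add_left]
    ring_nf
  have transformed_argument : -(u / r) / τ + 1 / 2 - (-1 / τ) / 2 =
      (-(u / r) + τ / 2 + 1 / 2) / τ := by
    field_simp
    ring
  have root_ne_zero : (-I * τ) ^ (1 / 2 : ℂ) ≠ 0 := by simp [hτ₀]
  rw [br, nome, argument, Theta_exp (im_neg_one_div_pos hτ), th1_eq_jacobiTheta₂ hτ, reflection,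
    jacobiTheta₂_functional_equation (-(u / r) + τ / 2 + 1 / 2), transformed_argument, Cc,
    mul_assoc (xp _ _ _),
    ← neg_I_mul_cpow_half hτ, ← exp_pi_mul_I_mul_add_half, xp, xp]
  generalize jacobiTheta₂ _ (-1 / τ) = J
  field_simp [root_ne_zero]
  rw [mul_comm _ J]
  simp only [mul_assoc, ← exp_add]
  congr 2
  field_simp
  ring

lemma br_neg {τ : ℂ} {r : ℝ} (hτ : 0 < τ.im) (hr : r ≠ 0) (u : ℂ) : br τ r (-u) = -br τ r u := by
  rw [br_eq_mul_th1 hτ hr, br_eq_mul_th1 hτ hr, neg_div, th1_neg, mul_neg]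

lemma br_add_self {τ : ℂ} {r : ℝ} (hτ : 0 < τ.im) (hr : r ≠ 0) (u : ℂ) :
    br τ r (u + r) = -br τ r u := by
  rw [br_eq_mul_th1 hτ hr, br_eq_mul_th1 hτ hr, add_div, div_self (ofReal_ne_zero.mpr hr),
    th1_add_one, mul_neg]

end Bracket

section ProductFormulas

open scoped Real

/-- A pair of integers `(m, n)` is `(k + l, k - l)` or `(k + l + 1, k - l)`, according to the
parity of `m + n`. -/
def paritySplit : (ℤ × ℤ) ⊕ (ℤ × ℤ) ≃ ℤ × ℤ where
  toFun := Sum.elim (fun x => (x.1 + x.2, x.1 - x.2)) (fun x => (x.1 + x.2 + 1, x.1 - x.2))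
  invFun y :=
    if Even (y.1 + y.2) then .inl ((y.1 + y.2) / 2, (y.1 - y.2) / 2)
    else .inr ((y.1 + y.2 - 1) / 2, (y.1 - y.2 - 1) / 2)
  left_inv := by
    rintro (⟨k, l⟩ | ⟨k, l⟩) <;> grind
  right_inv := by
    rintro ⟨m, n⟩
    grind

lemma jacobiTheta₂_add_mul_sub {σ : ℂ} (hσ : 0 < σ.im) (x y : ℂ) :
    jacobiTheta₂ (x + y) σ * jacobiTheta₂ (x - y) σ =
      jacobiTheta₂ (2 * x) (2 * σ) * jacobiTheta₂ (2 * y) (2 * σ) +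
        exp (π * I * (2 * (x + y) + σ)) *
          (jacobiTheta₂ (2 * x + σ) (2 * σ) * jacobiTheta₂ (2 * y + σ) (2 * σ)) := by
  have hσ_two : 0 < (2 * σ).im := by simpa using hσ
  have summable {ρ : ℂ} (hρ : 0 < ρ.im) (z : ℂ) : Summable fun n => ‖jacobiTheta₂_term n z ρ‖ :=
    ((summable_jacobiTheta₂_term_iff z ρ).mpr hρ).norm
  have summable_split := paritySplit.summable_iff.mpr
    (summable_mul_of_summable_norm (summable hσ (x + y)) (summable hσ (x - y)))
  simp only [jacobiTheta₂]
  rw [tsum_mul_tsum_of_summable_norm (summable hσ _) (summable hσ _),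
    tsum_mul_tsum_of_summable_norm (summable hσ_two _) (summable hσ_two _),
    tsum_mul_tsum_of_summable_norm (summable hσ_two _) (summable hσ_two _),
    ← paritySplit.tsum_eq, ← tsum_mul_left]
  refine (Summable.tsum_sum (summable_split.comp_injective Sum.inl_injective)
    (summable_split.comp_injective Sum.inr_injective)).trans ?_
  congr 1 <;> refine tsum_congr fun ⟨k, l⟩ => ?_ <;>
  · simp only [Function.comp, paritySplit, Equiv.coe_fn_mk, Sum.elim_inl, Sum.elim_inr,
      jacobiTheta₂_term, ← exp_add]
    push_cast
    ring_nf

variable {σ : ℂ}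

lemma th3_add_mul_th3_sub (hσ : 0 < σ.im) (x y : ℂ) :
    th3 (x + y) σ * th3 (x - y) σ =
      th3 (2 * x) (2 * σ) * th3 (2 * y) (2 * σ) + th2 (2 * x) (2 * σ) * th2 (2 * y) (2 * σ) := by
  have hσ_two : 0 < (2 * σ).im := by simpa using hσ
  have prefactor : exp (π * I * (2 * (x + y) + σ)) =
      exp (π * I * (2 * σ / 4 + 2 * x)) * exp (π * I * (2 * σ / 4 + 2 * y)) := by
    rw [← exp_add]
    ring_nf
  simp only [th3_eq_jacobiTheta₂ hσ, th3_eq_jacobiTheta₂ hσ_two, th2_eq_jacobiTheta₂ hσ_two]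
  rw [jacobiTheta₂_add_mul_sub hσ, mul_div_cancel_left₀ σ two_ne_zero, prefactor]
  ring

lemma th2_add_mul_th2_sub (hσ : 0 < σ.im) (x y : ℂ) :
    th2 (x + y) σ * th2 (x - y) σ =
      th2 (2 * x) (2 * σ) * th3 (2 * y) (2 * σ) + th3 (2 * x) (2 * σ) * th2 (2 * y) (2 * σ) := by
  have hσ_two : 0 < (2 * σ).im := by simpa using hσ
  have product := jacobiTheta₂_add_mul_sub hσ (x + σ / 2) y
  have shift : jacobiTheta₂ (2 * (x + σ / 2) + σ) (2 * σ) =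
      exp (-π * I * (2 * σ + 2 * (2 * x))) * jacobiTheta₂ (2 * x) (2 * σ) := by
    rw [← jacobiTheta₂_add_left']
    ring_nf
  have prefactor₂₃ : exp (π * I * (σ / 4 + (x + y))) * exp (π * I * (σ / 4 + (x - y))) =
      exp (π * I * (2 * σ / 4 + 2 * x)) := by
    rw [← exp_add]
    ring_nf
  have prefactor₃₂ : exp (π * I * (2 * σ / 4 + 2 * x)) *
      (exp (π * I * (2 * (x + σ / 2 + y) + σ)) * exp (-π * I * (2 * σ + 2 * (2 * x)))) =
        exp (π * I * (2 * σ / 4 + 2 * y)) := by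
    rw [← exp_add, ← exp_add]
    ring_nf
  simp only [th3_eq_jacobiTheta₂ hσ_two, th2_eq_jacobiTheta₂ hσ, th2_eq_jacobiTheta₂ hσ_two]
  rw [mul_div_cancel_left₀ σ two_ne_zero, mul_mul_mul_comm, prefactor₂₃, add_right_comm x y,
    sub_add_eq_add_sub, product, shift, ← prefactor₃₂, mul_add 2 x (σ / 2),
    mul_div_cancel₀ σ two_ne_zero]
  ring

lemma th0_add_mul_th0_sub (hσ : 0 < σ.im) (x y : ℂ) :
    th0 (x + y) σ * th0 (x - y) σ =
      th3 (2 * x) (2 * σ) * th3 (2 * y) (2 * σ) - th2 (2 * x) (2 * σ) * th2 (2 * y) (2 * σ) := by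
  rw [← th3_add_half, ← th3_add_half, add_right_comm, ← add_sub_right_comm, th3_add_mul_th3_sub hσ,
    mul_add, mul_one_div_cancel two_ne_zero, th3_add_one, th2_add_one]
  ring

lemma th1_add_mul_th1_sub (hσ : 0 < σ.im) (x y : ℂ) :
    th1 (x + y) σ * th1 (x - y) σ =
      th3 (2 * x) (2 * σ) * th2 (2 * y) (2 * σ) - th2 (2 * x) (2 * σ) * th3 (2 * y) (2 * σ) := by
  rw [← neg_mul_neg, ← th2_add_half, ← th2_add_half, add_right_comm, ← add_sub_right_comm,
    th2_add_mul_th2_sub hσ, mul_add, mul_one_div_cancel two_ne_zero, th3_add_one, th2_add_one]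
  ring

lemma th3_three_term (hσ : 0 < σ.im) (x y z w : ℂ) :
    th3 (y + x) σ * th3 (y - x) σ * (th1 (z + w) σ * th1 (z - w) σ) =
      th3 (z + x) σ * th3 (z - x) σ * (th1 (y + w) σ * th1 (y - w) σ) +
        th3 (w + x) σ * th3 (w - x) σ * (th1 (z + y) σ * th1 (z - y) σ) := by
  simp only [th3_add_mul_th3_sub hσ, th1_add_mul_th1_sub hσ]
  ring

lemma th2_three_term (hσ : 0 < σ.im) (x y z w : ℂ) :
    th2 (y + x) σ * th2 (y - x) σ * (th1 (z + w) σ * th1 (z - w) σ) =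
      th2 (z + x) σ * th2 (z - x) σ * (th1 (y + w) σ * th1 (y - w) σ) +
        th2 (w + x) σ * th2 (w - x) σ * (th1 (z + y) σ * th1 (z - y) σ) := by
  simp only [th2_add_mul_th2_sub hσ, th1_add_mul_th1_sub hσ]
  ring

lemma th2_zero_mul_th2_two_mul (hσ : 0 < σ.im) (x : ℂ) :
    th2 0 σ * th2 (2 * x) σ = 2 * th2 (2 * x) (2 * σ) * th3 (2 * x) (2 * σ) := by
  rw [mul_comm, two_mul x, ← sub_self x, th2_add_mul_th2_sub hσ]
  ring_nf

end ProductFormulas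

section IntertwiningIdentities

variable {σ : ℂ}

/-- `straight` and `turn` refer to the height paths `a, a + 1, a + 2` and `a, a + 1, a`. -/
lemma straight_theta_identity (hσ : 0 < σ.im) (x m d : ℂ) :
    th2 (m + d) σ * th2 (m - d) σ * (th0 (x + m) σ * th0 (x - m) σ) -
        th1 (m + d) σ * th1 (m - d) σ * (th3 (x + m) σ * th3 (x - m) σ) =
      th2 0 σ * th2 (2 * m) σ * (th0 (x + d) σ * th0 (x - d) σ) := by
  rw [th2_zero_mul_th2_two_mul hσ]
  simp only [th0_add_mul_th0_sub hσ, th1_add_mul_th1_sub hσ, th2_add_mul_th2_sub hσ,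
    th3_add_mul_th3_sub hσ]
  ring

lemma turn_theta_identity (hσ : 0 < σ.im) (x y m d : ℂ) :
    (th2 (m + d) σ * th2 (m - d) σ * (th0 (x + d + y) σ * th0 (x + d - y) σ) -
        th1 (m + d) σ * th1 (m - d) σ * (th3 (x + d + y) σ * th3 (x + d - y) σ)) *
      (th1 (2 * x) (2 * σ) * th1 (4 * m) (2 * σ)) =
    th2 0 σ * th2 (2 * m) σ *
      (th0 (x + m + y) σ * th0 (x + m - y) σ *
          (th1 (2 * (x - (m - d))) (2 * σ) * th1 (2 * (m + d)) (2 * σ)) +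
        th0 (x - m + y) σ * th0 (x - m - y) σ *
          (th1 (2 * (x + (m + d))) (2 * σ) * th1 (2 * (m - d)) (2 * σ))) := by
  have hσ_two : 0 < (2 * σ).im := by simpa using hσ
  have three_term₃ := th3_three_term hσ_two x (x + 2 * d) (x + 2 * m) (x - 2 * m)
  have three_term₂ := th2_three_term hσ_two x (x + 2 * d) (x + 2 * m) (x - 2 * m)
  rw [th2_zero_mul_th2_two_mul hσ]
  simp only [th0_add_mul_th0_sub hσ, th1_add_mul_th1_sub hσ, th2_add_mul_th2_sub hσ,
    th3_add_mul_th3_sub hσ]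
  rw [show x + 2 * d + x = 2 * (x + d) by ring, show x + 2 * d - x = 2 * d by ring,
    show x + 2 * m + x = 2 * (x + m) by ring, show x + 2 * m - x = 2 * m by ring,
    show x - 2 * m + x = 2 * (x - m) by ring, show x - 2 * m - x = -(2 * m) by ring,
    show x + 2 * m + (x - 2 * m) = 2 * x by ring, show x + 2 * m - (x - 2 * m) = 4 * m by ring,
    show x + 2 * d + (x - 2 * m) = 2 * (x - (m - d)) by ring,
    show x + 2 * d - (x - 2 * m) = 2 * (m + d) by ring,
    show x + 2 * m + (x + 2 * d) = 2 * (x + (m + d)) by ring,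
    show x + 2 * m - (x + 2 * d) = 2 * (m - d) by ring] at three_term₃ three_term₂
  rw [th3_neg hσ_two] at three_term₃
  rw [th2_neg] at three_term₂
  linear_combination
    2 * th2 (2 * m) (2 * σ) * th3 (2 * y) (2 * σ) * three_term₃ -
      2 * th3 (2 * m) (2 * σ) * th2 (2 * y) (2 * σ) * three_term₂

end IntertwiningIdentities

section Symmetries

variable {τ : ℂ} {r : ℝ}

/-- The left-hand side of the vertex-face correspondence: the `R`-matrix applied to the
intertwining vectors along the path `a, b, c`. -/
def vertexSide (τ : ℂ) (r : ℝ) (u v : ℂ) (e1 e2 a b c : ℤ) : ℂ :=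
  ∑ e1' ∈ ({1, -1} : Finset ℤ), ∑ e2' ∈ ({1, -1} : Finset ℤ),
    Rbar τ r (u - v) e1 e2 e1' e2' * psi τ r u e1' a b * psi τ r v e2' b c

/-- The right-hand side of the vertex-face correspondence: the sum over the paths `a, b', c` of
the intertwining vectors weighted by `W̄`. -/
def faceSide (τ : ℂ) (r : ℝ) (u v : ℂ) (e1 e2 a b c : ℤ) : ℂ :=
  ∑ b' ∈ ({a - 1, a + 1} : Finset ℤ).filter fun b' => |b' - c| = 1,
    psi τ r v e2 a b' * psi τ r u e1 b' c * Wb τ r (u - v) a b b' c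

lemma add_self_div_two_mul_self (hr : r ≠ 0) (z : ℂ) :
    (z + r) / (2 * r) = z / (2 * r) + 1 / 2 := by
  have hr₀ : (r : ℂ) ≠ 0 := ofReal_ne_zero.mpr hr
  field_simp

lemma psi_one (u : ℂ) (a b : ℤ) :
    psi τ r u 1 a b = th0 ((((a : ℂ) - b) * u + a) / (2 * r)) (τ / 2) :=
  if_pos rfl

lemma psi_neg_one (u : ℂ) (a b : ℤ) :
    psi τ r u (-1) a b = th3 ((((a : ℂ) - b) * u + a) / (2 * r)) (τ / 2) :=
  if_neg (by decide)

lemma psi_add_self (hr : r ≠ 0) (u : ℂ) {ε a b : ℤ} (hε : ε = 1 ∨ ε = -1) (hab : |a - b| = 1) :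
    psi τ r (u + r) ε a b = psi τ r u (-ε) a b := by
  have th0_sub_half (x σ : ℂ) : th0 (x - 1 / 2) σ = th3 x σ := by
    rw [← th3_add_half, sub_add_cancel]
  have th3_sub_half (x σ : ℂ) : th3 (x - 1 / 2) σ = th0 x σ := by
    rw [← th0_add_half, sub_add_cancel]
  have hr₀ : (r : ℂ) ≠ 0 := ofReal_ne_zero.mpr hr
  rcases eq_or_eq_neg_of_abs_eq hab with h | h
  · have argument : (((a : ℂ) - b) * (u + r) + a) / (2 * r) =
        (((a : ℂ) - b) * u + a) / (2 * r) + 1 / 2 := by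
      rw [← Int.cast_sub, h]
      field_simp
      push_cast
      ring
    rcases hε with rfl | rfl <;>
      simp only [neg_neg, psi_one, psi_neg_one, argument, th0_add_half, th3_add_half]
  · have argument : (((a : ℂ) - b) * (u + r) + a) / (2 * r) =
        (((a : ℂ) - b) * u + a) / (2 * r) - 1 / 2 := by
      rw [← Int.cast_sub, h]
      field_simp
      push_cast
      ring
    rcases hε with rfl | rfl <;>
      simp only [neg_neg, psi_one, psi_neg_one, argument, th0_sub_half, th3_sub_half]

lemma aw_add_self (hr : r ≠ 0) (w : ℂ) : aw τ r (w + r) = bw τ r w := by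
  rw [aw, bw, ← add_assoc, add_self_div_two_mul_self hr, add_self_div_two_mul_self hr,
    th2_add_half, th2_add_half, mul_neg, mul_neg, neg_div_neg_eq]

lemma bw_add_self (hr : r ≠ 0) (w : ℂ) : bw τ r (w + r) = aw τ r w := by
  rw [aw, bw, ← add_assoc, add_self_div_two_mul_self hr, add_self_div_two_mul_self hr,
    th1_add_half, th1_add_half]

lemma cw_add_self (hr : r ≠ 0) (w : ℂ) : cw τ r (w + r) = dw τ r w := by
  rw [cw, dw, ← add_assoc, add_self_div_two_mul_self hr, add_self_div_two_mul_self hr,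
    th2_add_half, th1_add_half, mul_neg]

lemma dw_add_self (hr : r ≠ 0) (w : ℂ) : dw τ r (w + r) = cw τ r w := by
  rw [cw, dw, ← add_assoc, add_self_div_two_mul_self hr, add_self_div_two_mul_self hr,
    th2_add_half, th1_add_half, mul_neg, neg_div_neg_eq]

lemma Rbar_add_self (hr : r ≠ 0) (w : ℂ) {e1 e2 e1' e2' : ℤ} (he1 : e1 = 1 ∨ e1 = -1)
    (he2 : e2 = 1 ∨ e2 = -1) (he1' : e1' = 1 ∨ e1' = -1) (he2' : e2' = 1 ∨ e2' = -1) :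
    Rbar τ r (w + r) e1 e2 e1' e2' = Rbar τ r w (-e1) e2 (-e1') e2' := by
  rcases he1 with rfl | rfl <;> rcases he2 with rfl | rfl <;> rcases he1' with rfl | rfl <;>
    rcases he2' with rfl | rfl <;>
    simp [Rbar, aw_add_self hr, bw_add_self hr, cw_add_self hr, dw_add_self hr]

lemma Rbar_neg (w : ℂ) (e1 e2 e1' e2' : ℤ) :
    Rbar τ r w (-e1) (-e2) (-e1') (-e2') = Rbar τ r w e1 e2 e1' e2' := by
  simp only [Rbar, neg_inj]

lemma Rbar_sub_self (hr : r ≠ 0) (w : ℂ) {e1 e2 e1' e2' : ℤ} (he1 : e1 = 1 ∨ e1 = -1)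
    (he2 : e2 = 1 ∨ e2 = -1) (he1' : e1' = 1 ∨ e1' = -1) (he2' : e2' = 1 ∨ e2' = -1) :
    Rbar τ r (w - r) e1 e2 e1' e2' = Rbar τ r w e1 (-e2) e1' (-e2') := by
  conv_rhs => rw [← sub_add_cancel w r]
  rw [Rbar_add_self hr _ he1 (by omega) he1' (by omega), Rbar_neg]

lemma Wb_add_self (hτ : 0 < τ.im) (hr : r ≠ 0) (w : ℂ) (a b d c : ℤ) :
    Wb τ r (w + r) a b d c = Wb τ r w a b d c := by
  have br_sub_self (x : ℂ) : br τ r (x - (w + r)) = -br τ r (x - w) := by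
    rw [← neg_neg (br τ r (x - (w + r))), ← br_add_self hτ hr]
    ring_nf
  simp only [Wb, br_sub_self, ← add_assoc, br_add_self hτ hr, mul_neg, neg_mul, neg_div_neg_eq]

lemma Wb_sub_self (hτ : 0 < τ.im) (hr : r ≠ 0) (w : ℂ) (a b d c : ℤ) :
    Wb τ r (w - r) a b d c = Wb τ r w a b d c := by
  rw [← Wb_add_self hτ hr, sub_add_cancel]

lemma vertexSide_add_self_left (hr : r ≠ 0) (u v : ℂ) {e1 e2 a b : ℤ} (c : ℤ)
    (he1 : e1 = 1 ∨ e1 = -1) (he2 : e2 = 1 ∨ e2 = -1) (hab : |a - b| = 1) :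
    vertexSide τ r (u + r) v e1 e2 a b c = vertexSide τ r u v (-e1) e2 a b c := by
  refine sum_equiv (Equiv.neg ℤ) (fun e1' => ?_) fun e1' he1' => sum_congr rfl fun e2' he2' => ?_
  · simp only [mem_insert, mem_singleton, Equiv.neg_apply]
    omega
  rw [mem_insert, mem_singleton] at he1' he2'
  rw [add_sub_right_comm, Rbar_add_self hr _ he1 he2 he1' he2', psi_add_self hr u he1' hab,
    Equiv.neg_apply]

lemma vertexSide_add_self_right (hr : r ≠ 0) (u v : ℂ) {e1 e2 b c : ℤ} (a : ℤ)
    (he1 : e1 = 1 ∨ e1 = -1) (he2 : e2 = 1 ∨ e2 = -1) (hbc : |b - c| = 1) :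
    vertexSide τ r u (v + r) e1 e2 a b c = vertexSide τ r u v e1 (-e2) a b c := by
  refine sum_congr rfl fun e1' he1' => sum_equiv (Equiv.neg ℤ) (fun e2' => ?_) fun e2' he2' => ?_
  · simp only [mem_insert, mem_singleton, Equiv.neg_apply]
    omega
  rw [mem_insert, mem_singleton] at he1' he2'
  rw [← sub_sub, Rbar_sub_self hr _ he1 he2 he1' he2', psi_add_self hr v he2' hbc,
    Equiv.neg_apply]

lemma faceSide_add_self_left (hτ : 0 < τ.im) (hr : r ≠ 0) (u v : ℂ) {e1 : ℤ} (e2 a b c : ℤ)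
    (he1 : e1 = 1 ∨ e1 = -1) :
    faceSide τ r (u + r) v e1 e2 a b c = faceSide τ r u v (-e1) e2 a b c := by
  refine sum_congr rfl fun b' hb' => ?_
  rw [psi_add_self hr u he1 (mem_filter.mp hb').2, add_sub_right_comm, Wb_add_self hτ hr]

lemma faceSide_add_self_right (hτ : 0 < τ.im) (hr : r ≠ 0) (u v : ℂ) {e2 : ℤ} (e1 a b c : ℤ)
    (he2 : e2 = 1 ∨ e2 = -1) :
    faceSide τ r u (v + r) e1 e2 a b c = faceSide τ r u v e1 (-e2) a b c := by
  refine sum_congr rfl fun b' hb' => ?_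
  have hab' : |a - b'| = 1 := by
    have := (mem_filter.mp hb').1
    rw [mem_insert, mem_singleton] at this
    grind
  rw [psi_add_self hr v he2 hab', ← sub_sub, Wb_sub_self hτ hr]

lemma psi_neg_neg (hτ : 0 < τ.im) (u : ℂ) (ε a b : ℤ) :
    psi τ r u ε (-a) (-b) = psi τ r u ε a b := by
  have hσ : 0 < (τ / 2).im := by simpa using hτ
  have argument : (((-a : ℤ) - (-b : ℤ) : ℂ) * u + (-a : ℤ)) / (2 * r) =
      -((((a : ℂ) - b) * u + a) / (2 * r)) := by
    push_cast
    ring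
  rw [psi, argument, th0_neg hσ, th3_neg hσ, psi]

lemma Wb_neg (hτ : 0 < τ.im) (hr : r ≠ 0) (w : ℂ) (a b d c : ℤ) :
    Wb τ r w (-a) (-b) (-d) (-c) = Wb τ r w a b d c := by
  have br_neg_add (x y : ℂ) : br τ r (-x + y) = -br τ r (x - y) := by
    rw [← br_neg hτ hr, neg_sub, neg_add_eq_sub]
  have br_neg_sub (x y : ℂ) : br τ r (-x - y) = -br τ r (x + y) := by
    rw [← br_neg hτ hr, neg_add']
  have neg_eq_neg_add (x n : ℤ) : -x = -a + n ↔ x = a - n := by omega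
  have neg_eq_neg_sub (x n : ℤ) : -x = -a - n ↔ x = a + n := by omega
  have add_one_ne_sub_one : a + 1 ≠ a - 1 := by omega
  simp only [Wb, Int.cast_neg, br_neg_add, br_neg_sub, br_neg hτ hr, neg_mul, neg_div_neg_eq,
    neg_eq_neg_add, neg_eq_neg_sub, neg_inj]
  by_cases hb : b = a + 1
  · simp [hb, add_one_ne_sub_one]
  · simp [hb]

lemma vertexSide_neg (hτ : 0 < τ.im) (u v : ℂ) (e1 e2 a b c : ℤ) :
    vertexSide τ r u v e1 e2 (-a) (-b) (-c) = vertexSide τ r u v e1 e2 a b c := by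
  simp only [vertexSide, psi_neg_neg hτ]

lemma faceSide_neg (hτ : 0 < τ.im) (hr : r ≠ 0) (u v : ℂ) (e1 e2 a b c : ℤ) :
    faceSide τ r u v e1 e2 (-a) (-b) (-c) = faceSide τ r u v e1 e2 a b c := by
  refine sum_equiv (Equiv.neg ℤ) (fun b' => ?_) fun b' _ => ?_
  · simp only [mem_filter, mem_insert, mem_singleton, Equiv.neg_apply]
    grind
  rw [← psi_neg_neg hτ v, ← psi_neg_neg hτ u, ← Wb_neg hτ hr]
  simp only [neg_neg, Equiv.neg_apply]

end Symmetries

section Correspondence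

variable {τ : ℂ} {r : ℝ}

lemma vertexSide_one_one (u v : ℂ) (a b c : ℤ) :
    vertexSide τ r u v 1 1 a b c =
      (th2 (1 / (2 * r)) (τ / 2) * th2 ((u - v) / (2 * r)) (τ / 2) *
            (psi τ r u 1 a b * psi τ r v 1 b c) -
          th1 (1 / (2 * r)) (τ / 2) * th1 ((u - v) / (2 * r)) (τ / 2) *
            (psi τ r u (-1) a b * psi τ r v (-1) b c)) /
        (th2 0 (τ / 2) * th2 ((1 + (u - v)) / (2 * r)) (τ / 2)) := by
  simp only [vertexSide, Int.reduceNeg, Rbar, and_true, aw, reduceCtorEq, and_false, ↓reduceIte,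
    dw, ite_mul, zero_mul, mem_singleton, not_false_eq_true, sum_insert, sum_singleton, add_zero,
    zero_add]
  ring

lemma faceSide_straight (u v : ℂ) (e1 e2 a : ℤ) :
    faceSide τ r u v e1 e2 a (a + 1) (a + 2) =
      psi τ r v e2 a (a + 1) * psi τ r u e1 (a + 1) (a + 2) := by
  have steps : ({a - 1, a + 1} : Finset ℤ).filter (fun b' => |b' - (a + 2)| = 1) = {a + 1} := by
    ext b'
    simp only [mem_filter, mem_insert, mem_singleton]
    grind
  rw [faceSide, steps, sum_singleton, Wb, if_pos ⟨rfl, rfl, rfl⟩, mul_one]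

lemma faceSide_turn (u v : ℂ) (e1 e2 a : ℤ) :
    faceSide τ r u v e1 e2 a (a + 1) a =
      (psi τ r v e2 a (a + 1) * psi τ r u e1 (a + 1) a * (br τ r (a - (u - v)) * br τ r 1) +
          psi τ r v e2 a (a - 1) * psi τ r u e1 (a - 1) a * (br τ r (a + 1) * br τ r (u - v))) /
        (br τ r a * br τ r (1 + (u - v))) := by
  have steps : ({a - 1, a + 1} : Finset ℤ).filter (fun b' => |b' - a| = 1) = {a - 1, a + 1} := by
    rw [filter_eq_self]
    grind
  have stay : Wb τ r (u - v) a (a + 1) (a + 1) a =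
      br τ r (a - (u - v)) * br τ r 1 / (br τ r a * br τ r (1 + (u - v))) := by
    grind [Wb]
  have cross : Wb τ r (u - v) a (a + 1) (a - 1) a =
      br τ r (a + 1) * br τ r (u - v) / (br τ r a * br τ r (1 + (u - v))) := by
    grind [Wb]
  rw [faceSide, steps, sum_pair (by omega), stay, cross]
  ring

lemma vertexSide_eq_faceSide_straight (hτ : 0 < τ.im) {u v : ℂ} (a : ℤ)
    (hth2 : th2 0 (τ / 2) ≠ 0) (hth2_add : th2 ((1 + (u - v)) / (2 * r)) (τ / 2) ≠ 0) :
    vertexSide τ r u v 1 1 a (a + 1) (a + 2) = faceSide τ r u v 1 1 a (a + 1) (a + 2) := by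
  have hσ : 0 < (τ / 2).im := by simpa using hτ
  rw [vertexSide_one_one, faceSide_straight, div_eq_iff (mul_ne_zero hth2 hth2_add)]
  have key := straight_theta_identity hσ ((2 * a + 1 - u - v) / (4 * r)) ((1 + (u - v)) / (4 * r))
    ((1 - (u - v)) / (4 * r))
  simp only [psi_one, psi_neg_one]
  push_cast
  ring_nf at key ⊢
  exact key

lemma vertexSide_eq_faceSide_turn (hτ : 0 < τ.im) (hr : r ≠ 0) {u v : ℂ} {a : ℤ}
    (hth2 : th2 0 (τ / 2) ≠ 0) (hth2_add : th2 ((1 + (u - v)) / (2 * r)) (τ / 2) ≠ 0)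
    (hbr : br τ r a ≠ 0) (hbr_add : br τ r (1 + (u - v)) ≠ 0) :
    vertexSide τ r u v 1 1 a (a + 1) a = faceSide τ r u v 1 1 a (a + 1) a := by
  have hσ : 0 < (τ / 2).im := by simpa using hτ
  rw [vertexSide_one_one, faceSide_turn,
    div_eq_div_iff (mul_ne_zero hth2 hth2_add) (mul_ne_zero hbr hbr_add)]
  have key := turn_theta_identity hσ (a / (2 * r)) ((1 + u + v) / (4 * r))
    ((1 + (u - v)) / (4 * r)) ((1 - (u - v)) / (4 * r))
  simp only [psi_one, psi_neg_one, br_eq_mul_th1 hτ hr]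
  push_cast
  ring_nf at key ⊢
  linear_combination (Cc τ r) ^ 2 * key

lemma vertexSide_eq_faceSide_one_one (hτ : 0 < τ.im) (hr : r ≠ 0) {u v : ℂ} {a b c : ℤ}
    (hab : |a - b| = 1) (hbc : |b - c| = 1)
    (hth2 : th2 0 (τ / 2) ≠ 0) (hth2_add : th2 ((1 + (u - v)) / (2 * r)) (τ / 2) ≠ 0)
    (hbr : br τ r a ≠ 0) (hbr_add : br τ r (1 + (u - v)) ≠ 0) :
    vertexSide τ r u v 1 1 a b c = faceSide τ r u v 1 1 a b c := by
  wlog hb : b = a + 1 generalizing a b c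
  · rw [← vertexSide_neg hτ, ← faceSide_neg hτ hr]
    refine this (by grind) (by grind) ?_ (by grind)
    rwa [Int.cast_neg, br_neg hτ hr, neg_ne_zero]
  subst hb
  obtain rfl | rfl : c = a + 2 ∨ c = a := by grind
  · exact vertexSide_eq_faceSide_straight hτ a hth2 hth2_add
  · exact vertexSide_eq_faceSide_turn hτ hr hth2 hth2_add hbr hbr_add

lemma vertexSide_eq_faceSide_one_right (hτ : 0 < τ.im) (hr : r ≠ 0) {u v : ℂ} {e1 a b c : ℤ}
    (he1 : e1 = 1 ∨ e1 = -1) (hab : |a - b| = 1) (hbc : |b - c| = 1)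
    (hth2 : th2 0 (τ / 2) ≠ 0) (hth1_add : th1 ((1 + (u - v)) / (2 * r)) (τ / 2) ≠ 0)
    (hth2_add : th2 ((1 + (u - v)) / (2 * r)) (τ / 2) ≠ 0)
    (hbr : br τ r a ≠ 0) (hbr_add : br τ r (1 + (u - v)) ≠ 0) :
    vertexSide τ r u v e1 1 a b c = faceSide τ r u v e1 1 a b c := by
  rcases he1 with rfl | rfl
  · exact vertexSide_eq_faceSide_one_one hτ hr hab hbc hth2 hth2_add hbr hbr_add
  have shift : 1 + (u + r - v) = 1 + (u - v) + r := by ring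
  rw [← vertexSide_add_self_left hr u v c (.inl rfl) (.inl rfl) hab,
    ← faceSide_add_self_left hτ hr u v 1 a b c (.inl rfl)]
  refine vertexSide_eq_faceSide_one_one hτ hr hab hbc hth2 ?_ hbr ?_
  · rwa [shift, add_self_div_two_mul_self hr, th2_add_half, neg_ne_zero]
  · rwa [shift, br_add_self hτ hr, neg_ne_zero]

end Correspondence

/-- Baxter's vertex-face correspondence. -/
theorem vertex_face_correspondence (τ : ℂ) (r : ℝ) (hτ : 0 < τ.im) (hr : 0 < r)
    (u v : ℂ) (e1 e2 : ℤ) (he1 : e1 = 1 ∨ e1 = -1) (he2 : e2 = 1 ∨ e2 = -1)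
    (a b c : ℤ) (hab : |a - b| = 1) (hbc : |b - c| = 1)
    (h1 : th2 0 (τ / 2) ≠ 0)
    (h2 : th1 ((1 + (u - v)) / (2 * (r : ℂ))) (τ / 2) ≠ 0)
    (h3 : th2 ((1 + (u - v)) / (2 * (r : ℂ))) (τ / 2) ≠ 0)
    (h4 : br τ r (a : ℂ) ≠ 0) (h5 : br τ r (1 + (u - v)) ≠ 0) :
    ∑ e1' ∈ ({1, -1} : Finset ℤ), ∑ e2' ∈ ({1, -1} : Finset ℤ),
        Rbar τ r (u - v) e1 e2 e1' e2' * psi τ r u e1' a b * psi τ r v e2' b c =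
      ∑ b' ∈ ({a - 1, a + 1} : Finset ℤ).filter fun b' => |b' - c| = 1,
        psi τ r v e2 a b' * psi τ r u e1 b' c * Wb τ r (u - v) a b b' c := by
  change vertexSide τ r u v e1 e2 a b c = faceSide τ r u v e1 e2 a b c
  have hr₀ := hr.ne'
  rcases he2 with rfl | rfl
  · exact vertexSide_eq_faceSide_one_right hτ hr₀ he1 hab hbc h1 h2 h3 h4 h5
  have shift : 1 + (u - v) = 1 + (u - (v + r)) + r := by ring
  rw [shift, add_self_div_two_mul_self hr₀] at h2 h3
  rw [th2_add_half, neg_ne_zero] at h3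
  rw [shift, br_add_self hτ hr₀, neg_ne_zero] at h5
  rw [← vertexSide_add_self_right hr₀ u v a he1 (.inl rfl) hbc,
    ← faceSide_add_self_right hτ hr₀ u v e1 a b c (.inl rfl)]
  exact vertexSide_eq_faceSide_one_right hτ hr₀ he1 hab hbc h1 h3 h2 h4 h5

end Ell
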